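/- Let δ be a real number with 0 < δ ≤ 1/100, and let T = {(k+1/2)·δ : k ∈ ℕ, (k+1/2)·δ ≤ 1/2}. Then Σ_{t∈T} tanh(t)² ≥ |T|/16, where |T| is the cardinality of T. Equivalently, for the target f(x) = tanh(x) on the symmetric grid ±T and the constant reference g(x) = 1/2, the success probability 𝒩_f²/𝒩_g² = (Σ_{t∈T} tanh(t)²)/(|T|/4) is at least 1/4, so a single round of amplitude amplification suffices. -/

import Mathlib

open scoped BigOperators

lemma tanh_sq_aux (t : ℝ) (h0 : 0 ≤ t) (h1 : t ≤ 1 / 2) :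
    t ^ 2 / 1.29 ≤ Real.tanh t ^ 2 := by
  have hs : t ≤ Real.sinh t := Real.self_le_sinh_iff.2 h0
  have hc := Real.cosh_le_exp_half_sq t
  have hp := Real.cosh_pos t
  have he : Real.exp (1 / 4) ≤ 1.29 := by
    have h4 : Real.exp (1 / 4) ^ 4 = Real.exp 1 := by
      rw [← Real.exp_nat_mul]; norm_num
    have := Real.exp_one_lt_d9
    by_contra hcon
    push Not at hcon
    have h5 : (1.29 : ℝ) ^ 4 < Real.exp (1 / 4) ^ 4 := by gcongr
    rw [h4] at h5
    norm_num at h5 this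
    linarith
  have hc2 : Real.cosh t ^ 2 ≤ 1.29 := by
    calc Real.cosh t ^ 2 ≤ Real.exp (t ^ 2 / 2) ^ 2 := by gcongr
      _ = Real.exp (t ^ 2) := by rw [← Real.exp_nat_mul]; congr 1; push_cast; ring
      _ ≤ Real.exp (1 / 4) := by apply Real.exp_le_exp.2; nlinarith
      _ ≤ 1.29 := he
  rw [Real.tanh_eq_sinh_div_cosh, div_pow]
  gcongr

lemma sum_sq_aux (δ : ℝ) (N : ℕ) :
    ∑ k ∈ Finset.range N, (((k : ℝ) + 1 / 2) * δ) ^ 2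
      = N * ((N * δ) ^ 2 / 3 - δ ^ 2 / 12) := by
  induction N with
  | zero => simp
  | succ n ih => rw [Finset.sum_range_succ, ih]; push_cast; ring

/-- Success probability for hyperbolic-tangent state preparation: on the positive half
of the symmetric grid `T = {(k+1/2)·δ : (k+1/2)·δ ≤ 1/2}` with `0 < δ ≤ 1/100`,
`Σ_{t∈T} tanh(t)² ≥ |T|/16`; equivalently, for the target `f = tanh` and the constant
reference `g = 1/2`, the success probability `(Σ_{t∈T} tanh(t)²)/(|T|/4)` is at least
`1/4`. -/
theorem stmt8 (δ : ℝ) (hδ : 0 < δ) (hδ' : δ ≤ 1 / 100)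
    (T : Finset ℕ) (hT : ∀ k : ℕ, k ∈ T ↔ ((k : ℝ) + 1 / 2) * δ ≤ 1 / 2) :
    (∑ k ∈ T, Real.tanh (((k : ℝ) + 1 / 2) * δ) ^ 2) ≥ (T.card : ℝ) / 16 ∧
    (∑ k ∈ T, Real.tanh (((k : ℝ) + 1 / 2) * δ) ^ 2) / ((T.card : ℝ) / 4)
      ≥ 1 / 4 := by
  have hTN : T = Finset.range ⌊1 / (2 * δ) + 1 / 2⌋₊ := by
    ext k
    rw [hT, Finset.mem_range, ← Nat.succ_le_iff, Nat.le_floor_iff (by positivity)]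
    have e : 1 / (2 * δ) = (1 / 2) / δ := by field_simp
    rw [← le_div_iff₀ hδ, e]
    push_cast
    constructor <;> intro h <;> linarith
  have hlow := Nat.lt_floor_add_one (1 / (2 * δ) + 1 / 2)
  generalize ⌊1 / (2 * δ) + 1 / 2⌋₊ = N at hTN hlow
  have hN : 0.495 ≤ N * δ := by
    have h2 : 1 / (2 * δ) < N + 1 / 2 := by linarith
    rw [div_lt_iff₀ (by positivity)] at h2
    norm_num
    nlinarith
  have hcard : (T.card : ℝ) = N := by simp [hTN]
  have hNpos : (0 : ℝ) < N := by
    by_contra hcon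
    norm_num at hN
    nlinarith
  have main : (∑ k ∈ T, Real.tanh (((k : ℝ) + 1 / 2) * δ) ^ 2) ≥ (T.card : ℝ) / 16 := by
    have h1 : ∑ k ∈ T, (((k : ℝ) + 1 / 2) * δ) ^ 2 / 1.29
        ≤ ∑ k ∈ T, Real.tanh (((k : ℝ) + 1 / 2) * δ) ^ 2 :=
      Finset.sum_le_sum fun k hk => tanh_sq_aux _ (by positivity) ((hT k).1 hk)
    refine le_trans ?_ h1
    rw [← Finset.sum_div, hcard, hTN, sum_sq_aux]
    have h3 : (0.495 : ℝ) ^ 2 ≤ (N * δ) ^ 2 := by gcongr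
    have h4 : δ ^ 2 ≤ (1 / 100) ^ 2 := by gcongr
    rw [div_le_div_iff₀ (by norm_num) (by norm_num), mul_assoc]
    gcongr
    norm_num at h3 h4 ⊢
    linarith
  refine ⟨main, ?_⟩
  rw [ge_iff_le, le_div_iff₀ (by rw [hcard]; positivity)]
  linarith
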